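/- Let v ∈ Ω, n ≥ 1, and let (cᵢ)_{i∈ℤ} be the unique (n−1, n)-partition of v. Then: (1) no two consecutive blocks are both s_{n−1}, i.e. it never happens that c_{i+1} − cᵢ = c_{i+2} − c_{i+1} = q_{n−1}; and (2) every maximal run of consecutive blocks equal to sₙ consists of exactly a_{n+1} or a_{n+1} + 1 blocks. -/

import Mathlib

open scoped Classical

noncomputable section

/-- The Gauss map. -/
def gaussMap (x : ℝ) : ℝ := Int.fract x⁻¹

/-- `pq α k` is the partial quotient `a_{k+1}` of the continued fraction of `α`. -/
def pq (α : ℝ) (k : ℕ) : ℕ := ⌊(gaussMap^[k] α)⁻¹⌋₊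

/-- `qd α (n+1)` is the convergent denominator `q_n`; `qd α 0 = q_{-1} = 0`, `qd α 1 = q₀ = 1`. -/
def qd (α : ℝ) : ℕ → ℕ
  | 0 => 0
  | 1 => 1
  | (n+2) => pq α n * qd α (n+1) + qd α n

/-- The circle map sequence of rotation number `α` (value `true` means letter `1`). -/
def v0 (α : ℝ) (n : ℤ) : Bool := decide (1 - α ≤ Int.fract ((n : ℝ) * α))

/-- The word `(v₀(m+1), …, v₀(m+n))`. -/
def word (α : ℝ) (m n : ℕ) : List Bool :=
  (List.range n).map (fun i => v0 α ((m : ℤ) + 1 + i))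

/-- `w` is a factor (admissible word) of `v₀`. -/
def IsFactor (α : ℝ) (w : List Bool) : Prop := ∃ m : ℕ, w = word α m w.length

/-- `w` occurs as a subword of the prefix `(v₀(1), …, v₀(N))`. -/
def OccursIn (α : ℝ) (w : List Bool) (N : ℕ) : Prop :=
  ∃ m : ℕ, m + w.length ≤ N ∧ w = word α m w.length

/-- `exhaust α n` is `f(n)`: the least `N` such that every factor of length `n`
occurs in `(v₀(1), …, v₀(N))`. -/
def exhaust (α : ℝ) (n : ℕ) : ℕ :=
  sInf {N | ∀ w : List Bool, w.length = n → IsFactor α w → OccursIn α w N}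

/-- number of occurrences of `w` in the prefix `(v₀(1), …, v₀(N))`. -/
def occCount (α : ℝ) (w : List Bool) (N : ℕ) : ℕ :=
  ((Finset.range N).filter (fun m => m + w.length ≤ N ∧ word α m w.length = w)).card

/-- the word `(v(m), v(m+1), …, v(m+n-1))` of a two-sided sequence. -/
def wordAt (v : ℤ → Bool) (m : ℤ) (n : ℕ) : List Bool :=
  (List.range n).map (fun i => v (m + i))

/-- the hull `Ω`: closure of the set of translates of `v₀`. -/
def hull (α : ℝ) : Set (ℤ → Bool) :=
  closure {u | ∃ m : ℤ, u = fun n => v0 α (n - m)}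


/-- `sw α (n+1)` is the word `sₙ`: `sw α 0 = s₋₁ = 1`, `sw α 1 = s₀ = 0`,
`sw α 2 = s₁ = s₀^{a₁-1} s₋₁`, and `s_{n+1} = sₙ^{a_{n+1}} s_{n-1}`. -/
def sw (α : ℝ) : ℕ → List Bool
  | 0 => [true]
  | 1 => [false]
  | 2 => (List.replicate (pq α 0 - 1) [false]).flatten ++ [true]
  | (n+3) => (List.replicate (pq α (n+1)) (sw α (n+2))).flatten ++ sw α (n+1)

/-- The block of the partition `c` starting at index `i` is the word `s_{lev - 1}`
(of length `q_{lev-1} = qd α lev`), occupying sites `c i + 1, …, c (i+1)` of `v`. -/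
def BlockIs (α : ℝ) (v : ℤ → Bool) (c : ℤ → ℤ) (i : ℤ) (lev : ℕ) : Prop :=
  c (i + 1) - c i = (qd α lev : ℤ) ∧ wordAt v (c i + 1) (qd α lev) = sw α lev

/-- `c` is an `(n-1, n)`-partition of `v`: a strictly increasing two-sided sequence of
cut points, with `c 0 ≤ 0 < c 1`, tending to `±∞`, each of whose blocks is
`s_{n-1}` or `sₙ`. -/
def IsPartition (α : ℝ) (v : ℤ → Bool) (n : ℕ) (c : ℤ → ℤ) : Prop :=
  StrictMono c ∧ c 0 ≤ 0 ∧ 0 < c 1 ∧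
  Filter.Tendsto c Filter.atTop Filter.atTop ∧
  Filter.Tendsto c Filter.atBot Filter.atBot ∧
  ∀ i : ℤ, BlockIs α v c i n ∨ BlockIs α v c i (n + 1)

/-- Concatenation of the words coded by `w` at level `n`: `true` stands for `sw α n`, `false` for
`sw α (n + 1)`. -/
def expandWord (α : ℝ) (n : ℕ) (w : List Bool) : List Bool :=
  w.flatMap fun b => if b then sw α n else sw α (n + 1)

/-- The morphism `true ↦ false`, `false ↦ falseᵃ true`, passing from codings at level `n + 1` to
codings at level `n`. -/
def refineWord (a : ℕ) (w : List Bool) : List Bool :=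
  w.flatMap fun b => if b then [false] else List.replicate a false ++ [true]

/-- The exponent in the recursion `sw α (k + 2) = (sw α (k + 1)) ^ swExp α k ++ sw α k`. -/
def swExp (α : ℝ) : ℕ → ℕ
  | 0 => pq α 0 - 1
  | (k + 1) => pq α (k + 1)

/-- The asymptotic ratio of the number of blocks `sw α n` to the number of blocks
`sw α (n + 1)`. -/
def blockRatio (α : ℝ) : ℕ → ℝ
  | 0 => α / (1 - α)
  | (k + 1) => (blockRatio α k)⁻¹ - swExp α k

/-- The numbers of letters `true` and `false` in `w` are nearly in ratio `x`. -/
def RatioBalanced (x : ℝ) (w : List Bool) : Prop :=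
  |(w.count true : ℝ) - x * w.count false| < 1 + x

theorem sw_add_two (α : ℝ) (k : ℕ) :
    sw α (k + 2) = (List.replicate (swExp α k) (sw α (k + 1))).flatten ++ sw α k := by
  cases k <;> simp [sw, swExp]

theorem getLast?_sw (α : ℝ) (n : ℕ) : (sw α n).getLast? = some (decide (Even n)) := by
  induction n using Nat.twoStepInduction with
  | zero => simp [sw]
  | one => simp [sw]
  | more k ih _ =>
    rw [sw_add_two, List.getLast?_append, ih]
    simp [Nat.even_add]

theorem sw_ne_sw_succ (α : ℝ) (n : ℕ) : sw α n ≠ sw α (n + 1) := by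
  intro h
  have := getLast?_sw α n
  rw [h, getLast?_sw α (n + 1)] at this
  simp only [Nat.even_add_one, Option.some.injEq, decide_eq_decide] at this
  tauto

theorem refineWord_append (a : ℕ) (u w : List Bool) :
    refineWord a (u ++ w) = refineWord a u ++ refineWord a w := by
  simp [refineWord]

theorem refineWord_cons_true (a : ℕ) (w : List Bool) :
    refineWord a (true :: w) = false :: refineWord a w := by
  simp [refineWord]

theorem refineWord_cons_false (a : ℕ) (w : List Bool) :
    refineWord a (false :: w) = List.replicate a false ++ true :: refineWord a w := by
  simp [refineWord]

theorem expandWord_append (α : ℝ) (n : ℕ) (u w : List Bool) :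
    expandWord α n (u ++ w) = expandWord α n u ++ expandWord α n w := by
  simp [expandWord]

theorem expandWord_zero (α : ℝ) (w : List Bool) : expandWord α 0 w = w := by
  induction w with
  | nil => rfl
  | cons b w ih =>
    rw [← List.singleton_append, expandWord_append, ih]
    cases b <;> simp [expandWord, sw]

theorem expandWord_succ (α : ℝ) (n : ℕ) (w : List Bool) :
    expandWord α (n + 1) w = expandWord α n (refineWord (swExp α n) w) := by
  induction w with
  | nil => rfl
  | cons b w ih =>
    rw [← List.singleton_append, expandWord_append, refineWord_append, expandWord_append, ih]
    congr 1
    cases b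
    · simp [expandWord, refineWord, sw_add_two, List.flatMap_append, List.flatMap_replicate]
    · simp [expandWord, refineWord]

theorem count_true_refineWord (a : ℕ) (w : List Bool) :
    (refineWord a w).count true = w.count false := by
  induction w with
  | nil => rfl
  | cons b w ih =>
    cases b
    · simp [refineWord_cons_false, ih, List.count_replicate]
    · simp [refineWord_cons_true, ih]

theorem count_false_refineWord (a : ℕ) (w : List Bool) :
    (refineWord a w).count false = w.count true + a * w.count false := by
  induction w with
  | nil => rfl
  | cons b w ih =>
    cases b
    · simp [refineWord_cons_false, ih]; ring
    · simp [refineWord_cons_true, ih]; ring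

theorem length_le_length_refineWord (a : ℕ) (w : List Bool) :
    w.length ≤ (refineWord a w).length := by
  induction w with
  | nil => simp
  | cons b w ih =>
    cases b
    · simp [refineWord_cons_false]; omega
    · simpa [refineWord_cons_true] using ih

/-- Refined words start with `false` repeated `a` times, as far as they are long enough. -/
theorem replicate_prefix_refineWord (a : ℕ) (w : List Bool) (k : ℕ) (hk : k ≤ w.length)
    (hka : k ≤ a) : List.replicate k false <+: refineWord a w := by
  induction w generalizing k with
  | nil => simp_all
  | cons b w ih =>
    cases b
    · rw [refineWord_cons_false]
      refine List.IsPrefix.trans ?_ (List.prefix_append _ _)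
      refine ⟨List.replicate (a - k) false, ?_⟩
      rw [List.replicate_append_replicate]
      congr 1; omega
    · rw [refineWord_cons_true]
      cases k with
      | zero => simp
      | succ k =>
        rw [List.replicate_succ, List.cons_prefix_cons]
        exact ⟨rfl, ih k (by simpa using hk) (by omega)⟩

/-- Near-balance with ratio `x` of the refined words yields near-balance with ratio `x⁻¹ - a` of
the words themselves. -/
theorem ratioBalanced_of_refineWord {x : ℝ} (hx : 0 < x) {a : ℕ} (ha : (a : ℝ) ≤ x⁻¹)
    {L : Set (List Bool)} (hext : ∀ w ∈ L, ∀ k : ℕ, ∃ e, k ≤ e.length ∧ w ++ e ∈ L)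
    (hbal : ∀ w ∈ L, ∀ u, u <:+: refineWord a w → RatioBalanced x u) :
    ∀ w ∈ L, ∀ u, u <:+: w → RatioBalanced (x⁻¹ - a) u := by
  rintro w hw u ⟨p, q, rfl⟩
  have hxx : x * x⁻¹ = 1 := mul_inv_cancel₀ hx.ne'
  rw [RatioBalanced, abs_lt]
  constructor
  · by_cases hmem : false ∈ u
    · obtain ⟨r, t, rfl, hr⟩ := List.eq_append_cons_of_mem hmem
      have hb := hbal _ hw (true :: refineWord a t) ?_
      · rw [RatioBalanced, abs_lt] at hb
        have h1 := hb.2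
        simp [count_true_refineWord, count_false_refineWord] at h1
        have h2 := mul_lt_mul_of_pos_right h1 (inv_pos.mpr hx)
        have h3 : x * ((t.count true : ℝ) + a * t.count false) * x⁻¹
            = (t.count true : ℝ) + a * t.count false := by
          field_simp
        have h4 : (0 : ℝ) ≤ r.count true := by positivity
        simp [List.count_eq_zero.mpr hr]
        nlinarith
      · refine ⟨refineWord a (p ++ r) ++ List.replicate a false, refineWord a q, ?_⟩
        simp [refineWord_append, refineWord_cons_false]
    · rw [List.count_eq_zero.mpr hmem]
      have : (0 : ℝ) ≤ u.count true := by positivity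
      simp only [Nat.cast_zero, mul_zero, sub_zero]
      linarith
  · obtain ⟨e, he, hwe⟩ := hext _ hw a
    obtain ⟨z, hz⟩ := replicate_prefix_refineWord a (q ++ e) a (by simp; omega) le_rfl
    have hb := hbal _ hwe (refineWord a u ++ List.replicate a false) ?_
    · rw [RatioBalanced, abs_lt] at hb
      have h1 := hb.1
      simp only [List.count_append, count_true_refineWord, count_false_refineWord,
        List.count_replicate] at h1
      simp at h1
      have h2 := mul_lt_mul_of_pos_right h1 (inv_pos.mpr hx)
      have h3 : x * ((u.count true : ℝ) + a * u.count false + a) * x⁻¹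
          = (u.count true : ℝ) + a * u.count false + a := by
        field_simp
      nlinarith
    · refine ⟨refineWord a p, z, ?_⟩
      rw [List.append_assoc (p ++ u), refineWord_append, refineWord_append, ← hz]
      simp

theorem gaussMap_iterate_mem {α : ℝ} (hirr : Irrational α) (h0 : 0 < α) (h1 : α < 1) (n : ℕ) :
    Irrational (gaussMap^[n] α) ∧ 0 < gaussMap^[n] α ∧ gaussMap^[n] α < 1 := by
  induction n with
  | zero => exact ⟨hirr, h0, h1⟩
  | succ n ih =>
    rw [Function.iterate_succ_apply', gaussMap]
    have hi : Irrational (Int.fract (gaussMap^[n] α)⁻¹) := by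
      rw [Int.fract]
      exact ih.1.inv.sub_intCast _
    exact ⟨hi, lt_of_le_of_ne (Int.fract_nonneg _) hi.ne_zero.symm, Int.fract_lt_one _⟩

theorem blockRatio_succ {α : ℝ} (hirr : Irrational α) (h0 : 0 < α) (h1 : α < 1) (n : ℕ) :
    blockRatio α (n + 1) = gaussMap^[n + 1] α := by
  induction n with
  | zero =>
    have hp : 1 ≤ pq α 0 := by
      rw [pq, Nat.one_le_floor_iff]
      exact (one_le_inv₀ h0).mpr h1.le
    have hf : (pq α 0 : ℝ) = (⌊α⁻¹⌋ : ℤ) := natCast_floor_eq_intCast_floor (inv_pos.mpr h0).le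
    simp only [blockRatio, swExp, Nat.cast_sub hp, hf, zero_add, Function.iterate_one, gaussMap,
      Int.fract]
    field_simp
    push_cast
    ring
  | succ n ih =>
    have hpos := (gaussMap_iterate_mem hirr h0 h1 (n + 1)).2.1
    rw [Function.iterate_succ_apply', gaussMap, blockRatio, ih, swExp, pq, Int.fract,
      natCast_floor_eq_intCast_floor (inv_pos.mpr hpos).le]

theorem blockRatio_pos {α : ℝ} (hirr : Irrational α) (h0 : 0 < α) (h1 : α < 1) (n : ℕ) :
    0 < blockRatio α n := by
  cases n with
  | zero => exact div_pos h0 (sub_pos.mpr h1)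
  | succ n =>
    rw [blockRatio_succ hirr h0 h1]
    exact (gaussMap_iterate_mem hirr h0 h1 _).2.1

/-- If all factors of the expanded words have nearly `α` times their length letters `true`, then
the coding words are nearly balanced. -/
theorem ratioBalanced_of_expandWord {α : ℝ} (hirr : Irrational α) (h0 : 0 < α) (h1 : α < 1)
    (n : ℕ) {L : Set (List Bool)} (hext : ∀ w ∈ L, ∀ k : ℕ, ∃ e, k ≤ e.length ∧ w ++ e ∈ L)
    (hL : ∀ w ∈ L, ∀ u, u <:+: expandWord α n w → |(u.count true : ℝ) - α * u.length| < 1) :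
    ∀ w ∈ L, ∀ u, u <:+: w → RatioBalanced (blockRatio α n) u := by
  induction n generalizing L with
  | zero =>
    intro w hw u hu
    have h := hL w hw u (by rwa [expandWord_zero])
    have hpos : 0 < 1 - α := sub_pos.mpr h1
    have hlen : (u.length : ℝ) = u.count true + u.count false := by
      exact_mod_cast (List.count_true_add_count_false u).symm
    have e1 : (u.count true : ℝ) - α / (1 - α) * u.count false
        = (u.count true - α * u.length) / (1 - α) := by
      rw [hlen]; field_simp; ring
    have e2 : 1 + α / (1 - α) = 1 / (1 - α) := by field_simp; ring
    rw [RatioBalanced, blockRatio, e1, e2, abs_div, abs_of_pos hpos]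
    exact div_lt_div_of_pos_right h hpos
  | succ n ih =>
    have hnext := blockRatio_pos hirr h0 h1 (n + 1)
    rw [blockRatio] at hnext ⊢
    refine ratioBalanced_of_refineWord (blockRatio_pos hirr h0 h1 n) (by linarith) hext ?_
    intro w hw
    refine ih (L := Set.image (refineWord (swExp α n)) L) ?_ ?_ _ (Set.mem_image_of_mem _ hw)
    · rintro _ ⟨w, hw, rfl⟩ k
      obtain ⟨e, he, hwe⟩ := hext w hw k
      exact ⟨refineWord (swExp α n) e, he.trans (length_le_length_refineWord _ _), w ++ e, hwe,
        refineWord_append _ _ _⟩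
    · rintro _ ⟨w, hw, rfl⟩ u hu
      exact hL w hw u (by rwa [expandWord_succ])

theorem wordAt_eq_map (v : ℤ → Bool) (m : ℤ) (n : ℕ) :
    wordAt v m n = (List.range n).map fun i : ℕ => v (m + i) := by
  simp [wordAt, List.map_eq_flatMap, List.flatMap_assoc]

theorem length_wordAt (v : ℤ → Bool) (m : ℤ) (n : ℕ) : (wordAt v m n).length = n := by
  simp [wordAt]

theorem wordAt_add (v : ℤ → Bool) (m : ℤ) (j k : ℕ) :
    wordAt v m (j + k) = wordAt v m j ++ wordAt v (m + j) k := by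
  simp [wordAt_eq_map, List.range_add, add_assoc, Function.comp_def]

theorem wordAt_one (v : ℤ → Bool) (m : ℤ) : wordAt v m 1 = [v m] := by
  simp [wordAt]

theorem wordAt_congr {u v : ℤ → Bool} {m : ℤ} {n : ℕ} (h : ∀ i < n, u (m + i) = v (m + i)) :
    wordAt u m n = wordAt v m n := by
  simpa [wordAt_eq_map] using h

theorem infix_wordAt {v : ℤ → Bool} {m : ℤ} {n : ℕ} {u : List Bool} (h : u <:+: wordAt v m n) :
    ∃ j : ℤ, u = wordAt v j u.length := by
  obtain ⟨p, q, h⟩ := h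
  have hn : n = p.length + u.length + q.length := by
    rw [← length_wordAt v m n, ← h]; simp; ring
  rw [hn, wordAt_add, wordAt_add] at h
  have h' := (List.append_inj h (by simp [length_wordAt])).1
  exact ⟨_, (List.append_inj h' (by simp [length_wordAt])).2⟩

theorem count_true_wordAt_v0 {α : ℝ} (h0 : 0 < α) (h1 : α < 1) (s : ℤ) (N : ℕ) :
    ((wordAt (v0 α) s N).count true : ℤ) = ⌊((s : ℝ) + N) * α⌋ - ⌊(s : ℝ) * α⌋ := by
  induction N with
  | zero => simp [wordAt]
  | succ N ih =>
    rw [wordAt_add, List.count_append, Nat.cast_add, ih, wordAt_one]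
    set x : ℝ := ((s : ℝ) + N) * α with hx
    have e : ((s : ℝ) + (N + 1 : ℕ)) * α = x + α := by rw [hx]; push_cast; ring
    have hf := Int.floor_add_fract x
    have hf0 := Int.fract_nonneg x
    have hf1 := Int.fract_lt_one x
    have hv : v0 α (s + N) = decide (1 - α ≤ Int.fract x) := by
      simp [v0, hx]
    rw [e, hv]
    by_cases h : 1 - α ≤ Int.fract x
    · have : ⌊x + α⌋ = ⌊x⌋ + 1 := by
        rw [Int.floor_eq_iff]; push_cast; constructor <;> linarith
      simp [h, this]; ring
    · have : ⌊x + α⌋ = ⌊x⌋ := by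
        rw [Int.floor_eq_iff]; constructor <;> linarith
      simp [h, this]

theorem abs_count_wordAt_sub_lt_one {α : ℝ} (h0 : 0 < α) (h1 : α < 1) {v : ℤ → Bool}
    (hv : v ∈ hull α) (s : ℤ) (N : ℕ) : |((wordAt v s N).count true : ℝ) - α * N| < 1 := by
  have hopen : IsOpen {u : ℤ → Bool | ∀ i ∈ Finset.range N, u (s + i) = v (s + i)} := by
    have : {u : ℤ → Bool | ∀ i ∈ Finset.range N, u (s + i) = v (s + i)}
        = ⋂ i ∈ Finset.range N, {u : ℤ → Bool | u (s + i) = v (s + i)} := by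
      ext u; simp
    rw [this]
    refine isOpen_biInter_finset fun i _ => ?_
    exact (isOpen_discrete ({v (s + i)} : Set Bool)).preimage
      (continuous_apply (A := fun _ : ℤ => Bool) (s + i : ℤ))
  obtain ⟨u, hu, m, rfl⟩ := mem_closure_iff.mp hv _ hopen (by simp)
  have hw : wordAt v s N = wordAt (v0 α) (s - m) N := by
    refine (wordAt_congr (v := fun n => v0 α (n - m))
      fun i hi => (hu i (Finset.mem_range.mpr hi)).symm).trans ?_
    simp [wordAt, add_sub_right_comm]
  have hcount : ((wordAt v s N).count true : ℝ)
      = ⌊(((s - m : ℤ) : ℝ) + N) * α⌋ - ⌊((s - m : ℤ) : ℝ) * α⌋ := by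
    rw [hw]
    exact_mod_cast count_true_wordAt_v0 h0 h1 (s - m) N
  rw [hcount, abs_lt]
  have := Int.floor_le ((((s - m : ℤ) : ℝ) + N) * α)
  have := Int.lt_floor_add_one ((((s - m : ℤ) : ℝ) + N) * α)
  have := Int.floor_le (((s - m : ℤ) : ℝ) * α)
  have := Int.lt_floor_add_one (((s - m : ℤ) : ℝ) * α)
  constructor <;> linarith

/-- The coding of the blocks of `c` at level `n`: `false` marks the blocks `sw α (n + 1)`. -/
def blockCoding (α : ℝ) (v : ℤ → Bool) (n : ℕ) (c : ℤ → ℤ) (i : ℤ) : Bool :=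
  decide (¬ BlockIs α v c i (n + 1))

theorem expandWord_blockCoding {α : ℝ} {v : ℤ → Bool} {n : ℕ} {c : ℤ → ℤ}
    (hc : ∀ i : ℤ, BlockIs α v c i n ∨ BlockIs α v c i (n + 1)) (i : ℤ) (N : ℕ) :
    ∃ M : ℕ, c (i + N) - c i = M ∧
      expandWord α n (wordAt (blockCoding α v n c) i N) = wordAt v (c i + 1) M := by
  induction N with
  | zero => exact ⟨0, by simp, by simp [wordAt, expandWord]⟩
  | succ N ih =>
    obtain ⟨M, hM, hw⟩ := ih
    have key : ∃ K : ℕ, c (i + N + 1) - c (i + N) = K ∧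
        expandWord α n [blockCoding α v n c (i + N)] = wordAt v (c (i + N) + 1) K := by
      by_cases h : BlockIs α v c (i + N) (n + 1)
      · exact ⟨_, h.1, by rw [h.2]; simp [expandWord, blockCoding, h]⟩
      · have h' := (hc (i + N)).resolve_right h
        exact ⟨_, h'.1, by rw [h'.2]; simp [expandWord, blockCoding, h]⟩
    obtain ⟨K, hK, hw'⟩ := key
    refine ⟨M + K, ?_, ?_⟩
    · push_cast
      rw [← add_assoc]
      linarith
    · rw [wordAt_add, wordAt_one, expandWord_append, hw, hw', wordAt_add]
      congr 2
      linarith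

/-- The coding of a partition of an element of the hull is nearly balanced. -/
theorem ratioBalanced_blockCoding {α : ℝ} (hirr : Irrational α) (h0 : 0 < α) (h1 : α < 1)
    {v : ℤ → Bool} (hv : v ∈ hull α) {n : ℕ} {c : ℤ → ℤ}
    (hc : ∀ i : ℤ, BlockIs α v c i n ∨ BlockIs α v c i (n + 1)) (i : ℤ) (N : ℕ) :
    RatioBalanced (blockRatio α n) (wordAt (blockCoding α v n c) i N) := by
  refine ratioBalanced_of_expandWord hirr h0 h1 n
    (L := {w | ∃ (i : ℤ) (N : ℕ), w = wordAt (blockCoding α v n c) i N}) ?_ ?_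
    _ ⟨i, N, rfl⟩ _ List.infix_rfl
  · rintro _ ⟨i, N, rfl⟩ k
    exact ⟨wordAt (blockCoding α v n c) (i + N) k, (length_wordAt _ _ _).ge, i, N + k,
      (wordAt_add _ _ _ _).symm⟩
  · rintro _ ⟨i, N, rfl⟩ u hu
    obtain ⟨M, -, hw⟩ := expandWord_blockCoding hc i N
    rw [hw] at hu
    obtain ⟨j, hj⟩ := infix_wordAt hu
    have := abs_count_wordAt_sub_lt_one h0 h1 hv j u.length
    rwa [← hj] at this

theorem wordAt_eq_replicate {v : ℤ → Bool} {m : ℤ} {n : ℕ} {b : Bool}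
    (h : ∀ k < n, v (m + k) = b) : wordAt v m n = List.replicate n b := by
  refine List.eq_replicate_iff.mpr ⟨length_wordAt _ _ _, ?_⟩
  simp only [wordAt_eq_map, List.mem_map, List.mem_range]
  rintro _ ⟨k, hk, rfl⟩
  exact h k hk

/-- Corollary 2.2. In the `(n-1, n)`-partition of `v ∈ Ω`:
(1) two consecutive blocks are never both `s_{n-1}`; (2) every `sₙ`-block lies in a
finite maximal run of consecutive `sₙ`-blocks of length exactly `a_{n+1}` or
`a_{n+1} + 1`.  (Here `a_{n+1} = pq α n`.) -/
theorem partition_block_structure (α : ℝ) (hirr : Irrational α) (h0 : 0 < α) (h1 : α < 1)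
    (v : ℤ → Bool) (hv : v ∈ hull α) (n : ℕ) (hn : 1 ≤ n)
    (c : ℤ → ℤ) (hc : IsPartition α v n c) :
    (∀ i : ℤ, ¬ (BlockIs α v c i n ∧ BlockIs α v c (i + 1) n)) ∧
    (∀ i : ℤ, BlockIs α v c i (n + 1) →
      ∃ (i₀ : ℤ) (l : ℕ), 0 < l ∧ i₀ ≤ i ∧ i < i₀ + l ∧
        (∀ m : ℕ, m < l → BlockIs α v c (i₀ + m) (n + 1)) ∧
        ¬ BlockIs α v c (i₀ - 1) (n + 1) ∧ ¬ BlockIs α v c (i₀ + l) (n + 1) ∧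
        (l = pq α n ∨ l = pq α n + 1)) := by
  have hbal := ratioBalanced_blockCoding hirr h0 h1 hv hc.2.2.2.2.2
  obtain ⟨k, rfl⟩ : ∃ k, n = k + 1 := ⟨n - 1, by omega⟩
  obtain ⟨-, hx0, hx1⟩ := gaussMap_iterate_mem hirr h0 h1 (k + 1)
  rw [blockRatio_succ hirr h0 h1] at hbal
  have hpq : pq α (k + 1) = ⌊(gaussMap^[k + 1] α)⁻¹⌋₊ := rfl
  set x := gaussMap^[k + 1] α
  have hxx : x * x⁻¹ = 1 := mul_inv_cancel₀ hx0.ne'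
  have hle : (pq α (k + 1) : ℝ) ≤ x⁻¹ := hpq ▸ Nat.floor_le (inv_pos.mpr hx0).le
  have hlt : x⁻¹ < pq α (k + 1) + 1 := hpq ▸ Nat.lt_floor_add_one _
  set w := blockCoding α v (k + 1) c with hw
  have hwB : ∀ i, w i = false ↔ BlockIs α v c i (k + 1 + 1) := by simp [hw, blockCoding]
  have hwA : ∀ i, w i = true ↔ ¬ BlockIs α v c i (k + 1 + 1) := by simp [hw, blockCoding]
  have hrun : ∀ (i : ℤ) (l : ℕ), (∀ m < l, w (i + m) = false) → l ≤ pq α (k + 1) + 1 := by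
    intro i l hl
    have h := hbal i l
    rw [wordAt_eq_replicate hl, RatioBalanced, abs_lt] at h
    simp [List.count_replicate] at h
    have h2 : (l : ℝ) < pq α (k + 1) + 1 + 1 := by nlinarith
    exact Nat.lt_succ_iff.mp (by exact_mod_cast h2)
  refine ⟨?_, fun i hi => ?_⟩
  · rintro i ⟨hi, hi'⟩
    have hA : ∀ j, BlockIs α v c j (k + 1) → w j = true := fun j hj =>
      (hwA j).mpr fun hB => sw_ne_sw_succ α (k + 1) <| by
        rw [← hj.2, ← hB.2]
        congr 1
        exact_mod_cast hj.1.symm.trans hB.1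
    have h := hbal i (1 + 1)
    rw [wordAt_add, wordAt_one, wordAt_one, hA i hi, Nat.cast_one, hA _ hi', RatioBalanced,
      abs_lt] at h
    norm_num at h
    linarith
  · have hexR : ∃ r : ℕ, w (i + r) = true := by
      by_contra! h
      have := hrun i (pq α (k + 1) + 2) fun m _ => by simpa using h m
      omega
    have hexL : ∃ r : ℕ, w (i - r) = true := by
      by_contra! h
      have := hrun (i - (pq α (k + 1) + 2 : ℕ)) (pq α (k + 1) + 2) fun m hm => by
        have := h (pq α (k + 1) + 2 - m)
        rw [Nat.cast_sub hm.le, ← sub_add] at this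
        simpa using this
      omega
    have hR := Nat.find_spec hexR
    have hRmin := fun m => Nat.find_min hexR (m := m)
    have hL := Nat.find_spec hexL
    have hLmin := fun m => Nat.find_min hexL (m := m)
    generalize Nat.find hexR = r at *
    generalize Nat.find hexL = s at *
    have hwi := (hwB i).mpr hi
    have hr0 : r ≠ 0 := by rintro rfl; simp [hwi] at hR
    have hs0 : s ≠ 0 := by rintro rfl; simp [hwi] at hL
    have hall : ∀ m < r + s - 1, w (i - s + 1 + m) = false := by
      intro m hm
      by_cases hms : m + 1 ≤ s
      · have := hLmin (s - 1 - m) (by omega)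
        rw [show i - ((s - 1 - m : ℕ) : ℤ) = i - s + 1 + m by omega] at this
        simpa using this
      · have := hRmin (m + 1 - s) (by omega)
        rw [show i + ((m + 1 - s : ℕ) : ℤ) = i - s + 1 + m by omega] at this
        simpa using this
    refine ⟨i - s + 1, r + s - 1, by omega, by omega, by omega,
      fun m hm => (hwB _).mp (hall m hm), (hwA _).mp (by simpa using hL), (hwA _).mp ?_, ?_⟩
    · rwa [show i - s + 1 + ((r + s - 1 : ℕ) : ℤ) = i + r by omega]
    · have hup := hrun _ _ hall
      have hlow := hbal (i - s) (1 + (r + s - 1) + 1)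
      rw [wordAt_add, wordAt_add, wordAt_one, wordAt_one, hL, Nat.cast_one,
        wordAt_eq_replicate hall,
        show i - s + ((1 + (r + s - 1) : ℕ) : ℤ) = i + r by omega, hR, RatioBalanced, abs_lt]
        at hlow
      generalize r + s - 1 = l at *
      simp [List.count_replicate] at hlow
      have h2 : (pq α (k + 1) : ℝ) < l + 1 := by nlinarith
      have h3 : pq α (k + 1) < l + 1 := by exact_mod_cast h2
      omega

end
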